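/- Let m ≥ 3 be an integer, let G be a graph in which every pair of vertices has a common neighbor, and let H be a C_m-saturated spanning subgraph of G. Then H is connected and has diameter at most 2m−2. -/

import Mathlib

open Filter Real

/-- `H` contains a (not necessarily induced) copy of `F`. -/
def ContainsCopy {α β : Type*} (F : SimpleGraph α) (H : SimpleGraph β) : Prop :=
  ∃ f : α → β, Function.Injective f ∧ ∀ ⦃a b⦄, F.Adj a b → H.Adj (f a) (f b)

/-- `H` is `F`-saturated in `G`: `H` is a spanning subgraph of `G` that is `F`-free,
and adding any edge of `G` missing from `H` creates a copy of `F`. -/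
def IsSaturatedIn {V : Type*} {α : Type*} (G H : SimpleGraph V) (F : SimpleGraph α) : Prop :=
  H ≤ G ∧ ¬ ContainsCopy F H ∧
    ∀ v w : V, G.Adj v w → ¬ H.Adj v w →
      ContainsCopy F (H ⊔ SimpleGraph.fromEdgeSet {s(v, w)})

/-- The cycle `C_m`, as a graph on `ZMod m`. -/
def cycGraph (m : ℕ) : SimpleGraph (ZMod m) :=
  SimpleGraph.fromRel (fun a b => a = b + 1)

/-!
The copy of `C_m` created by adding a missing edge `vw` of `G` must use `vw`, so the rest of that
copy is a path of length `m - 1` from `v` to `w` inside `H`. Hence the endpoints of every edge of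
`G` are at distance at most `m - 1` in `H`, and two arbitrary vertices are joined in `G` by a walk
of length two through a common neighbor.
-/

section Distance

variable {V W : Type*} {G : SimpleGraph V} {H : SimpleGraph W}

lemma edist_map_le (f : G →g H) (u v : V) : H.edist (f u) (f v) ≤ G.edist u v :=
  le_iInf fun p => (SimpleGraph.edist_le (p.map f)).trans_eq (by rw [SimpleGraph.Walk.length_map])

lemma edist_le_of_forall_adj_succ (x : ℕ → V) (n : ℕ) (hx : ∀ i < n, G.Adj (x i) (x (i + 1))) :
    G.edist (x 0) (x n) ≤ n := by
  induction n with
  | zero => simp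
  | succ n ih =>
    calc G.edist (x 0) (x (n + 1))
        ≤ G.edist (x 0) (x n) + G.edist (x n) (x (n + 1)) := SimpleGraph.edist_triangle
      _ ≤ n + 1 := add_le_add (ih fun i hi => hx i (hi.trans n.lt_succ_self))
          (SimpleGraph.edist_eq_one_iff_adj.mpr (hx n n.lt_succ_self)).le
      _ = (n + 1 : ℕ) := by norm_cast

end Distance

section Saturation

variable {α V : Type*} {F : SimpleGraph α} {G H : SimpleGraph V} {v w : V}

lemma exists_deleteEdges_hom_of_containsCopy_sup_edge (hfree : ¬ ContainsCopy F H)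
    (hcopy : ContainsCopy F (H ⊔ SimpleGraph.fromEdgeSet {s(v, w)})) :
    ∃ a b, F.Adj a b ∧ ∃ f : F.deleteEdges {s(a, b)} →g H, f a = v ∧ f b = w := by
  obtain ⟨f, hf, hadj⟩ := hcopy
  have edge_or : ∀ {c d}, F.Adj c d → H.Adj (f c) (f d) ∨ s(f c, f d) = s(v, w) :=
    fun hcd => (SimpleGraph.sup_adj _ _ _ _ |>.mp (hadj hcd)).imp_right And.left
  obtain ⟨a, b, hab, hnew⟩ : ∃ a b, F.Adj a b ∧ ¬ H.Adj (f a) (f b) := by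
    by_contra! hold
    exact hfree ⟨f, hf, hold⟩
  have hvw : s(f a, f b) = s(v, w) := (edge_or hab).resolve_left hnew
  have hdel : ∀ {c d}, (F.deleteEdges {s(a, b)}).Adj c d → H.Adj (f c) (f d) := by
    intro c d hcd
    obtain ⟨hcd, hne⟩ := SimpleGraph.deleteEdges_adj.mp hcd
    exact (edge_or hcd).resolve_right fun h =>
      hne (Sym2.map.injective hf (h.trans hvw.symm))
  rcases Sym2.eq_iff.mp hvw with ⟨hav, hbw⟩ | ⟨haw, hbv⟩
  · exact ⟨a, b, hab, ⟨f, hdel⟩, hav, hbw⟩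
  · rw [Sym2.eq_swap] at hdel
    exact ⟨b, a, hab.symm, ⟨f, hdel⟩, hbv, haw⟩

lemma IsSaturatedIn.edist_le_of_adj (hsat : IsSaturatedIn G H F) {k : ℕ∞} (hk : 1 ≤ k)
    (hF : ∀ a b, F.Adj a b → (F.deleteEdges {s(a, b)}).edist a b ≤ k) (hvw : G.Adj v w) :
    H.edist v w ≤ k := by
  obtain ⟨-, hfree, hadd⟩ := hsat
  by_cases hH : H.Adj v w
  · exact (SimpleGraph.edist_eq_one_iff_adj.mpr hH).trans_le hk
  · obtain ⟨a, b, hab, f, rfl, rfl⟩ :=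
      exists_deleteEdges_hom_of_containsCopy_sup_edge hfree (hadd v w hvw hH)
    exact (edist_map_le f a b).trans (hF a b hab)

end Saturation

section Cycle

variable {m : ℕ}

lemma natCast_zmod_ne_zero_of_pos_of_lt {k : ℕ} (hpos : 0 < k) (hlt : k < m) :
    (k : ZMod m) ≠ 0 := by
  rw [Ne, ZMod.natCast_eq_zero_iff]
  exact Nat.not_dvd_of_pos_of_lt hpos hlt

lemma sym2_mk_add_one_inj {R : Type*} [AddMonoidWithOne R] [IsLeftCancelAdd R]
    (htwo : (2 : R) ≠ 0) {a b : R} :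
    s(a, a + 1) = s(b, b + 1) ↔ a = b := by
  refine ⟨fun h => ?_, fun h => by rw [h]⟩
  rcases Sym2.eq_iff.mp h with ⟨hab, -⟩ | ⟨hab, hba⟩
  · exact hab
  · refine absurd ?_ htwo
    rwa [hab, add_assoc, one_add_one_eq_two, add_eq_left] at hba

lemma cycGraph_adj_add_one (hm : 2 ≤ m) (a : ZMod m) : (cycGraph m).Adj a (a + 1) := by
  have hone : (1 : ZMod m) ≠ 0 := mod_cast natCast_zmod_ne_zero_of_pos_of_lt one_pos hm
  simp [cycGraph, hone]

lemma edist_deleteEdges_cycGraph_add_one_le (hm : 3 ≤ m) (a : ZMod m) :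
    ((cycGraph m).deleteEdges {s(a, a + 1)}).edist (a + 1) a ≤ (m - 1 : ℕ) := by
  have htwo : (2 : ZMod m) ≠ 0 := mod_cast natCast_zmod_ne_zero_of_pos_of_lt two_pos hm
  let x : ℕ → ZMod m := fun i => a + (i + 1 : ℕ)
  have x_zero : x 0 = a + 1 := by simp [x]
  have x_last : x (m - 1) = a := by
    simp only [x, Nat.sub_add_cancel (show 1 ≤ m by lia), ZMod.natCast_self, add_zero]
  have x_succ (i : ℕ) : x (i + 1) = x i + 1 := by simp only [x]; push_cast; ring
  have x_ne : ∀ i < m - 1, x i ≠ a := fun i hi => by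
    simpa only [x, Ne, add_eq_left] using
      natCast_zmod_ne_zero_of_pos_of_lt i.succ_pos (show i + 1 < m by lia)
  have x_adj : ∀ i < m - 1,
      ((cycGraph m).deleteEdges {s(a, a + 1)}).Adj (x i) (x (i + 1)) := fun i hi => by
    rw [x_succ, SimpleGraph.deleteEdges_adj, Set.mem_singleton_iff, sym2_mk_add_one_inj htwo]
    exact ⟨cycGraph_adj_add_one (by lia) (x i), x_ne i hi⟩
  simpa only [x_zero, x_last] using edist_le_of_forall_adj_succ x (m - 1) x_adj

lemma edist_deleteEdges_cycGraph_le (hm : 3 ≤ m) {a b : ZMod m} (hab : (cycGraph m).Adj a b) :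
    ((cycGraph m).deleteEdges {s(a, b)}).edist a b ≤ (m - 1 : ℕ) := by
  obtain ⟨-, rfl | rfl⟩ := (SimpleGraph.fromRel_adj _ _ _).mp hab
  · rw [Sym2.eq_swap]
    exact edist_deleteEdges_cycGraph_add_one_le hm b
  · rw [SimpleGraph.edist_comm]
    exact edist_deleteEdges_cycGraph_add_one_le hm a

end Cycle

theorem saturated_small_diameter_general {V : Type*} [Nonempty V]
    (m : ℕ) (hm : 3 ≤ m) (G H : SimpleGraph V)
    (hcn : ∀ u v : V, ∃ w : V, G.Adj u w ∧ G.Adj v w)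
    (hsat : IsSaturatedIn G H (cycGraph m)) :
    H.Connected ∧ ∀ u v : V, H.dist u v ≤ 2 * m - 2 := by
  have edge_bound {v w : V} (hvw : G.Adj v w) : H.edist v w ≤ (m - 1 : ℕ) :=
    hsat.edist_le_of_adj (by norm_cast; lia) (fun _ _ => edist_deleteEdges_cycGraph_le hm) hvw
  have pair_bound (u v : V) : H.edist u v ≤ (2 * m - 2 : ℕ) := by
    obtain ⟨w, huw, hvw⟩ := hcn u v
    calc H.edist u v
        ≤ H.edist u w + H.edist w v := SimpleGraph.edist_triangle
      _ ≤ (m - 1 : ℕ) + (m - 1 : ℕ) := add_le_add (edge_bound huw) (edge_bound hvw.symm)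
      _ = (2 * m - 2 : ℕ) := by norm_cast; lia
  exact ⟨⟨fun u v => SimpleGraph.reachable_of_edist_ne_top
      (ne_top_of_le_ne_top (ENat.natCast_ne_top _) (pair_bound u v))⟩,
    fun u v => ENat.toNat_le_of_le_natCast (pair_bound u v)⟩

/-- If every pair of vertices of `G` has a common neighbor and `H`
is a `C_m`-saturated spanning subgraph of `G` (`m ≥ 3`), then `H` is connected with
diameter at most `2m − 2`. -/
theorem saturated_small_diameter {V : Type*} [Fintype V] [Nonempty V]
    (m : ℕ) (hm : 3 ≤ m) (G H : SimpleGraph V)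
    (hcn : ∀ u v : V, ∃ w : V, G.Adj u w ∧ G.Adj v w)
    (hsat : IsSaturatedIn G H (cycGraph m)) :
    H.Connected ∧ ∀ u v : V, H.dist u v ≤ 2 * m - 2 :=
  saturated_small_diameter_general m hm G H hcn hsat
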